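/- arXiv:2310.18613 — 2 statements merged into one kernel-verified Lean document; each statement's English description precedes it below -/
import Mathlib

section
/- Let R be a commutative ring, let d ≥ 1 and let t_1, …, t_d ∈ R. Fix N with 1 ≤ N ≤ d, and suppose that the elementary symmetric polynomial values σ_k(t_1, …, t_d) vanish for every k with N ≤ k ≤ d. Then for every partition ω of d whose number of parts is at least N, the monomial symmetric polynomial m_ω evaluated at (t_1, …, t_d) is zero. -/
open MvPolynomial in
/-- Kill the variables of index at least `M`. -/
noncomputable def killHom (R : Type*) [CommRing R] (d M : ℕ) :
    MvPolynomial (Fin d) R →ₐ[R] MvPolynomial (Fin M) R :=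
  aeval (fun i => if h : i.val < M then X ⟨i.val, h⟩ else 0)

open MvPolynomial in
theorem killHom_esymm {R : Type*} [CommRing R] (d M : ℕ) (hM : M ≤ d) (k : ℕ) :
    killHom R d M (esymm (Fin d) R k) = esymm (Fin M) R k := by
  classical
  simp only [esymm, map_sum, map_prod, killHom, aeval_X]
  have hsub : ((Finset.univ : Finset (Fin M)).map (Fin.castLEEmb hM)).powersetCard k ⊆
      (Finset.univ : Finset (Fin d)).powersetCard k :=
    Finset.powersetCard_mono (Finset.subset_univ _)
  rw [← Finset.sum_subset hsub]
  · rw [Finset.powersetCard_map, Finset.sum_map]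
    refine Finset.sum_congr rfl fun s _ => ?_
    simp [Finset.mapEmbedding_apply]
  · intro s hs hns
    have : ∃ i ∈ s, ¬ i.val < M := by
      by_contra! hcon
      apply hns
      rw [Finset.mem_powersetCard] at hs ⊢
      refine ⟨fun i hi => ?_, hs.2⟩
      rw [Finset.mem_map]
      exact ⟨⟨i.val, hcon i hi⟩, Finset.mem_univ _, by ext; simp⟩
    obtain ⟨i, hi, hiM⟩ := this
    exact Finset.prod_eq_zero hi (by simp [hiM])

open MvPolynomial in
theorem killHom_msymm {R : Type*} [CommRing R] (d M n : ℕ) (ω : Nat.Partition n)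
    (hω : M < Multiset.card ω.parts) :
    killHom R d M (msymm (Fin d) R ω) = 0 := by
  classical
  rw [msymm, map_sum]
  refine Finset.sum_eq_zero fun s _ => ?_
  obtain ⟨s, rfl⟩ := s
  have : ∃ i ∈ s.1, ¬ i.val < M := by
    by_contra! hcon
    have h1 : Multiset.card (Nat.Partition.ofSym s).parts = s.1.toFinset.card := by
      simp [Nat.Partition.ofSym, Multiset.toFinset]
    have h2 : s.1.toFinset.card ≤ (Finset.range M).card :=
      Finset.card_le_card_of_injOn (fun i => i.val)
        (fun i hi => by simpa using hcon i (by simpa using hi))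
        (fun i _ j _ h => Fin.ext h)
    rw [Finset.card_range] at h2
    omega
  obtain ⟨i, hi, hiM⟩ := this
  rw [map_multiset_prod, Multiset.map_map]
  apply Multiset.prod_eq_zero
  rw [Multiset.mem_map]
  exact ⟨i, hi, by simp [killHom, hiM]⟩

open MvPolynomial in
theorem eval_eq_zero_of_killHom {R : Type*} [CommRing R] (d M : ℕ) (hM : M ≤ d) (t : Fin d → R)
    (hσ : ∀ k, M < k → k ≤ d → eval t (esymm (Fin d) R k) = 0)
    (p : MvPolynomial (Fin d) R) (hp : p.IsSymmetric) (h0 : killHom R d M p = 0) :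
    eval t p = 0 := by
  obtain ⟨q, hq⟩ := (esymmAlgHom_fin_bijective R d).2 ⟨p, hp⟩
  have hq' : p = aeval (fun i : Fin d ↦ esymm (Fin d) R (i + 1)) q := by
    rw [← esymmAlgHom_apply, hq]
  have h1 : (esymmAlgHom (Fin M) R M (killHom R d M q)).val = killHom R d M p := by
    rw [esymmAlgHom_apply, hq', ← AlgHom.comp_apply, ← AlgHom.comp_apply]
    congr 1
    ext1 i
    simp only [AlgHom.comp_apply, aeval_X, killHom_esymm d M hM]
    by_cases hi : i.val < M
    · simp [killHom, hi]
    · simp only [killHom, aeval_X, hi, dite_false, map_zero]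
      rw [esymm, Finset.powersetCard_eq_empty.2 (by simp; omega), Finset.sum_empty]
  have h2 : killHom R d M q = 0 := by
    apply esymmAlgHom_fin_injective R (le_refl M)
    rw [map_zero]
    exact Subtype.ext (by rw [h1, h0]; rfl)
  have h3 : aeval t p =
      aeval (fun j : Fin M => eval t (esymm (Fin d) R (j + 1))) (killHom R d M q) := by
    rw [hq', ← AlgHom.comp_apply, ← AlgHom.comp_apply]
    congr 1
    ext1 i
    simp only [AlgHom.comp_apply, aeval_X, killHom]
    by_cases hi : i.val < M
    · simp [hi, aeval_eq_eval]
    · simp only [hi, dite_false, map_zero]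
      exact hσ _ (by omega) i.2
  rw [h2, map_zero] at h3
  simpa [aeval_eq_eval] using h3

/-- Let `R` be a commutative ring, `d ≥ 1`, and `t : Fin d → R`.
Fix `N` with `1 ≤ N ≤ d` and suppose the elementary symmetric polynomials
`σ_k(t_1, …, t_d)` vanish for all `N ≤ k ≤ d`.  Then for every partition `ω` of `d`
with at least `N` parts, the monomial symmetric polynomial `m_ω` evaluated at
`(t_1, …, t_d)` is zero. -/
theorem msymm_eval_eq_zero_of_esymm_eval_eq_zero
    {R : Type*} [CommRing R] (d : ℕ) (hd : 1 ≤ d) (t : Fin d → R)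
    (N : ℕ) (hN1 : 1 ≤ N) (hNd : N ≤ d)
    (hσ : ∀ k, N ≤ k → k ≤ d → MvPolynomial.eval t (MvPolynomial.esymm (Fin d) R k) = 0)
    (ω : Nat.Partition d) (hω : N ≤ Multiset.card ω.parts) :
    MvPolynomial.eval t (MvPolynomial.msymm (Fin d) R ω) = 0 := by
  refine eval_eq_zero_of_killHom d (N - 1) (by omega) t (fun k h1 h2 => hσ k (by omega) h2) _
    (MvPolynomial.msymm_isSymmetric _ _ ω) (killHom_msymm d (N - 1) d ω (by omega))
end

section
/- Let d ≥ 1 and fix N with 1 ≤ N ≤ d. For every partition ω of d whose number of parts is at least N, the monomial symmetric polynomial m_ω in the polynomial ring ℤ[t_1, …, t_d] lies in the ideal generated by the elementary symmetric polynomials σ_N, σ_{N+1}, …, σ_d. -/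
open Finset in
theorem aux_map_univ_iff {d : ℕ} (f g : Fin d → ℕ) :
    (univ : Finset (Fin d)).val.map f = (univ : Finset (Fin d)).val.map g ↔
      ∃ e : Equiv.Perm (Fin d), f = g ∘ e := by
  rw [Fin.univ_val_map, Fin.univ_val_map, Multiset.coe_eq_coe]
  constructor
  · intro h
    have h1 : f ∘ Tuple.sort f = g ∘ Tuple.sort g := by
      apply List.ofFn_injective
      exact ((((Tuple.sort f).ofFn_comp_perm f).trans h).trans
        ((Tuple.sort g).ofFn_comp_perm g).symm).eq_of_pairwise'
        (Tuple.monotone_sort f).sortedLE_ofFn.pairwise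
        (Tuple.monotone_sort g).sortedLE_ofFn.pairwise
    refine ⟨(Tuple.sort f).symm.trans (Tuple.sort g), ?_⟩
    ext i
    have := congrFun h1 ((Tuple.sort f).symm i)
    simpa using this
  · rintro ⟨e, rfl⟩
    exact e.ofFn_comp_perm g

open Finset in
theorem aux_shift {d k : ℕ} (a : Fin d → ℕ) (S : Finset (Fin d)) (hS : #S = k)
    (ha : ∀ i, i ∉ S → a i = 0) :
    (univ : Finset (Fin d)).val.map (fun i => a i + if i ∈ S then 1 else 0) =
      ((univ : Finset (Fin d)).val.map a - Multiset.replicate (d - k) 0).map (· + 1)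
        + Multiset.replicate (d - k) 0 := by
  classical
  have hu : (univ : Finset (Fin d)).val = S.val + (Sᶜ).val := by
    have h : (univ : Finset (Fin d)) = S.disjUnion Sᶜ disjoint_compl_right := by
      ext i; simp [em]
    rw [h]
    rfl
  have h0 : (Sᶜ).val.map a = Multiset.replicate (d - k) 0 := by
    rw [Multiset.eq_replicate]
    refine ⟨by simp [Finset.card_compl, hS], ?_⟩
    intro b hb
    obtain ⟨i, hi, rfl⟩ := Multiset.mem_map.1 hb
    exact ha i (by simpa using hi)
  have h1 : (Sᶜ).val.map (fun i => a i + if i ∈ S then 1 else 0)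
      = Multiset.replicate (d - k) 0 := by
    rw [← h0]
    refine Multiset.map_congr rfl fun i hi => ?_
    have : i ∉ S := by simpa using hi
    simp [this]
  have h2 : S.val.map (fun i => a i + if i ∈ S then 1 else 0)
      = (S.val.map a).map (· + 1) := by
    rw [Multiset.map_map]
    refine Multiset.map_congr rfl fun i hi => ?_
    have : i ∈ S := by simpa using hi
    simp [this]
  rw [hu, Multiset.map_add, Multiset.map_add, h1, h2, h0, Multiset.add_sub_cancel_right]

open Finset in
theorem aux_symm_coeff {d : ℕ} {p : MvPolynomial (Fin d) ℤ} (hp : p.IsSymmetric)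
    (m m' : Fin d →₀ ℕ)
    (h : (univ : Finset (Fin d)).val.map m = (univ : Finset (Fin d)).val.map m') :
    p.coeff m = p.coeff m' := by
  obtain ⟨e, he⟩ := (aux_map_univ_iff m m').1 h
  have h1 : m' = m.mapDomain e := by
    ext i
    obtain ⟨j, rfl⟩ := e.surjective i
    rw [Finsupp.mapDomain_apply e.injective, he]
    rfl
  rw [h1]
  conv_rhs => rw [← hp e]
  rw [MvPolynomial.coeff_rename_mapDomain _ e.injective]

open Finset in
theorem aux_coeff_symm {d : ℕ} {p : MvPolynomial (Fin d) ℤ}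
    (hp : ∀ m m' : Fin d →₀ ℕ, (univ : Finset (Fin d)).val.map m =
      (univ : Finset (Fin d)).val.map m' → p.coeff m = p.coeff m') : p.IsSymmetric := by
  intro e
  ext m
  obtain ⟨m, rfl⟩ : ∃ n : Fin d →₀ ℕ, m = n.mapDomain e :=
    ⟨m.mapDomain e.symm, by rw [← Finsupp.mapDomain_comp]; simp⟩
  rw [MvPolynomial.coeff_rename_mapDomain _ e.injective]
  apply hp
  rw [aux_map_univ_iff]
  refine ⟨e, ?_⟩
  ext i
  simp [Finsupp.mapDomain_apply e.injective]

/-- indicator exponent -/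
noncomputable def auxInd {d : ℕ} (S : Finset (Fin d)) : Fin d →₀ ℕ :=
  ∑ i ∈ S, Finsupp.single i 1

theorem auxInd_apply {d : ℕ} (S : Finset (Fin d)) (i : Fin d) :
    auxInd S i = if i ∈ S then 1 else 0 := by
  classical
  simp [auxInd, Finsupp.finsetSum_apply, Finsupp.single_apply]

open Finset in
theorem aux_exists {d k : ℕ} {p : MvPolynomial (Fin d) ℤ} (hp : p.IsSymmetric) :
    ∃ q : MvPolynomial (Fin d) ℤ, q.IsSymmetric ∧
      ∀ (a : Fin d →₀ ℕ) (S : Finset (Fin d)), #S = k → a.support ⊆ S →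
        q.coeff a = p.coeff (a + auxInd S) := by
  classical
  have key : ∀ (a b : Fin d →₀ ℕ) (S T : Finset (Fin d)), #S = k → #T = k →
      a.support ⊆ S → b.support ⊆ T →
      (univ : Finset (Fin d)).val.map a = (univ : Finset (Fin d)).val.map b →
      p.coeff (a + auxInd S) = p.coeff (b + auxInd T) := by
    intro a b S T hS hT ha hb hab
    apply aux_symm_coeff hp
    have e1 : ⇑(a + auxInd S) = fun i => a i + if i ∈ S then 1 else 0 := by
      ext i; simp [auxInd_apply]
    have e2 : ⇑(b + auxInd T) = fun i => b i + if i ∈ T then 1 else 0 := by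
      ext i; simp [auxInd_apply]
    rw [e1, e2, aux_shift a S hS, aux_shift b T hT, hab]
    · intro i hi; by_contra h; exact hi (hb (by simpa using h))
    · intro i hi; by_contra h; exact hi (ha (by simpa using h))
  let c : (Fin d →₀ ℕ) → ℤ := fun a =>
    if h : ∃ S : Finset (Fin d), #S = k ∧ a.support ⊆ S then p.coeff (a + auxInd h.choose) else 0
  have hc : ∀ (a : Fin d →₀ ℕ) (S : Finset (Fin d)), #S = k → a.support ⊆ S →
      c a = p.coeff (a + auxInd S) := by
    intro a S hS ha
    have h : ∃ S : Finset (Fin d), #S = k ∧ a.support ⊆ S := ⟨S, hS, ha⟩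
    simp only [c, dif_pos h]
    exact key _ _ _ _ h.choose_spec.1 hS h.choose_spec.2 ha rfl
  let A : Finset (Fin d →₀ ℕ) := p.support.image (fun m => m - auxInd m.support)
  let q : MvPolynomial (Fin d) ℤ := ∑ a ∈ A, MvPolynomial.monomial a (c a)
  have hq : ∀ a, q.coeff a = c a := by
    intro a
    have : q.coeff a = if a ∈ A then c a else 0 := by
      simp [q, MvPolynomial.coeff_sum, MvPolynomial.coeff_monomial]
    rw [this]
    split_ifs with hA
    · rfl
    · by_contra hne
      by_cases h : ∃ S : Finset (Fin d), #S = k ∧ a.support ⊆ S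
      · obtain ⟨S, hS, ha⟩ := h
        rw [hc a S hS ha] at hne
        apply hA
        refine Finset.mem_image.2 ⟨a + auxInd S, ?_, ?_⟩
        · rw [MvPolynomial.mem_support_iff]; exact fun h => hne h.symm
        · have : (a + auxInd S).support = S := by
            ext i
            have := @ha i
            simp only [Finsupp.mem_support_iff] at this
            simp only [Finsupp.mem_support_iff, Finsupp.add_apply, auxInd_apply]
            split_ifs with hi <;> simp_all
          rw [this]; simp
      · exact hne (by simp only [c, dif_neg h])
  refine ⟨q, aux_coeff_symm ?_, fun a S hS ha => by rw [hq, hc a S hS ha]⟩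
  intro m m' hmm
  rw [hq, hq]
  have hcard : ∀ m : Fin d →₀ ℕ,
      #m.support = (((univ : Finset (Fin d)).val.map m).filter (· ≠ 0)).card := by
    intro m
    rw [Multiset.filter_map, Multiset.card_map]
    have : m.support = univ.filter (fun i => m i ≠ 0) := by ext; simp
    rw [this]; rfl
  have hcc : #m.support = #m'.support := by rw [hcard, hcard, hmm]
  have hex : ∀ m : Fin d →₀ ℕ, (∃ S : Finset (Fin d), #S = k ∧ m.support ⊆ S) ↔
      (#m.support ≤ k ∧ k ≤ d) := by
    intro m
    constructor
    · rintro ⟨S, hS, h⟩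
      exact ⟨hS ▸ card_le_card h, by simpa [hS] using card_le_univ S⟩
    · rintro ⟨h1, h2⟩
      obtain ⟨S, hS, hS2⟩ := exists_superset_card_eq h1 (by simpa using h2)
      exact ⟨S, hS2, hS⟩
  by_cases h : ∃ S : Finset (Fin d), #S = k ∧ m.support ⊆ S
  · have h' : ∃ S : Finset (Fin d), #S = k ∧ m'.support ⊆ S := by
      rw [hex] at h ⊢; rwa [← hcc]
    obtain ⟨S, hS, ha⟩ := h
    obtain ⟨T, hT, hb⟩ := h'
    rw [hc m S hS ha, hc m' T hT hb]
    exact key _ _ _ _ hS hT ha hb hmm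
  · have h' : ¬ ∃ S : Finset (Fin d), #S = k ∧ m'.support ⊆ S := by
      rw [hex] at h ⊢; rwa [← hcc]
    simp only [c, dif_neg h, dif_neg h']

open Finset in
theorem aux_main {d N : ℕ} (j : ℕ) : ∀ k, N ≤ k → k + j = d + 1 →
    ∀ p : MvPolynomial (Fin d) ℤ, p.IsSymmetric → (∀ m ∈ p.support, k ≤ #m.support) →
    p ∈ Ideal.span ((fun k => MvPolynomial.esymm (Fin d) ℤ k) '' Set.Icc N d) := by
  classical
  induction j with
  | zero =>
    intro k _ hk p _ h
    have : p = 0 := by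
      rw [← MvPolynomial.support_eq_empty, Finset.eq_empty_iff_forall_notMem]
      intro m hm
      have h1 := h m hm
      have h2 : #m.support ≤ d := by simpa using card_le_univ m.support
      omega
    rw [this]; exact zero_mem _
  | succ j ih =>
    intro k hNk hk p hp h
    obtain ⟨q, hq, hqc⟩ := aux_exists (k := k) hp
    have hmem : MvPolynomial.esymm (Fin d) ℤ k * q ∈
        Ideal.span ((fun k => MvPolynomial.esymm (Fin d) ℤ k) '' Set.Icc N d) :=
      Ideal.mul_mem_right _ _ (Ideal.subset_span ⟨k, ⟨hNk, by omega⟩, rfl⟩)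
    rw [← sub_add_cancel p (MvPolynomial.esymm (Fin d) ℤ k * q)]
    refine add_mem (ih (k + 1) (by omega) (by omega) _
      (hp.sub ((MvPolynomial.esymm_isSymmetric _ _ k).mul hq)) ?_) hmem
    intro m hm
    by_contra hlt
    rw [MvPolynomial.mem_support_iff] at hm
    apply hm
    have hle : ∀ S : Finset (Fin d), auxInd S ≤ m ↔ S ⊆ m.support := by
      intro S
      constructor
      · intro h i hi
        have := h i
        rw [auxInd_apply, if_pos hi] at this
        simp; omega
      · intro h i
        rw [auxInd_apply]
        split_ifs with hi
        · have := h hi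
          simp at this; omega
        · omega
    have hco : (MvPolynomial.esymm (Fin d) ℤ k * q).coeff m =
        ∑ S ∈ powersetCard k univ, if S ⊆ m.support then q.coeff (m - auxInd S) else 0 := by
      rw [MvPolynomial.esymm_eq_sum_monomial, Finset.sum_mul, MvPolynomial.coeff_sum]
      refine Finset.sum_congr rfl fun S _ => ?_
      rw [MvPolynomial.coeff_monomial_mul', one_mul]
      exact if_congr (hle S) rfl rfl
    rw [MvPolynomial.coeff_sub, hco, sub_eq_zero]
    rcases Nat.lt_or_ge #m.support k with hlt' | hge
    · rw [Finset.sum_eq_zero]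
      · by_contra hne
        have := h m (MvPolynomial.mem_support_iff.2 hne)
        omega
      · intro S hS
        rw [if_neg]
        intro hsub
        have := card_le_card hsub
        have := (mem_powersetCard.1 hS).2
        omega
    · have hmk : #m.support = k := by omega
      rw [Finset.sum_eq_single m.support]
      · rw [if_pos subset_rfl, hqc _ m.support hmk, tsub_add_cancel_of_le ((hle _).2 subset_rfl)]
        exact Finsupp.support_tsub
      · intro S hS hne
        rw [if_neg]
        intro hsub
        exact hne (eq_of_subset_of_card_le hsub (by rw [hmk, (mem_powersetCard.1 hS).2]))
      · intro hn
        exact absurd (mem_powersetCard.2 ⟨subset_univ _, hmk⟩) hn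


/-- Let `d ≥ 1` and fix `N` with `1 ≤ N ≤ d`.  For every partition `ω`
of `d` with at least `N` parts, the monomial symmetric polynomial `m_ω` in
`ℤ[t_1, …, t_d]` lies in the ideal generated by the elementary symmetric polynomials
`σ_N, σ_{N+1}, …, σ_d`. -/
theorem msymm_mem_ideal_span_esymm
    (d : ℕ) (hd : 1 ≤ d) (N : ℕ) (hN1 : 1 ≤ N) (hNd : N ≤ d)
    (ω : Nat.Partition d) (hω : N ≤ Multiset.card ω.parts) :
    MvPolynomial.msymm (Fin d) ℤ ω ∈
      Ideal.span ((fun k => MvPolynomial.esymm (Fin d) ℤ k) '' Set.Icc N d) := by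
  classical
  refine aux_main (d + 1 - N) N le_rfl (by omega) _
    (MvPolynomial.msymm_isSymmetric _ _ ω) ?_
  intro m hm
  rw [MvPolynomial.mem_support_iff, MvPolynomial.msymm, MvPolynomial.coeff_sum] at hm
  obtain ⟨⟨s, hs⟩, -, hne⟩ := Finset.exists_ne_zero_of_sum_ne_zero hm
  have hmon : ((s.1.map MvPolynomial.X).prod : MvPolynomial (Fin d) ℤ) =
      MvPolynomial.monomial (Multiset.toFinsupp s.1) 1 := by
    generalize s.1 = t
    induction t using Multiset.induction_on with
    | empty => simp
    | cons a t ih =>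
      rw [Multiset.map_cons, Multiset.prod_cons, ih, ← Multiset.singleton_add, map_add,
        Multiset.toFinsupp_singleton, MvPolynomial.X, MvPolynomial.monomial_mul, one_mul]
  simp only [hmon, MvPolynomial.coeff_monomial] at hne
  have hm' : Multiset.toFinsupp s.1 = m := by
    by_contra h
    exact hne (if_neg h)
  rw [← hm', Multiset.toFinsupp_support]
  rw [← hs] at hω
  simpa [Nat.Partition.ofSym, Multiset.toFinset] using hω
end
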